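/- arXiv:2306.00206 — 3 statements merged into one kernel-verified Lean document; each statement's English description precedes it below -/
import Mathlib

section
/- Let X be a set, let h_1,…,h_M : X → ℝ^d be embedding functions, and let g_1,…,g_M : ℝ^d → ℝ^m be downstream heads, each Lipschitz with constant L ≥ 0 with respect to the Euclidean norms. Set f_i = g_i ∘ h_i. Suppose x*, x^r ∈ X satisfy ‖h_i(x^r) − h_i(x*)‖₂ ≤ ε for every i ∈ {1,…,M}, and let σ ≥ 0 satisfy σ² = (1/M²) ∑_{1≤i<j≤M} ‖f_i(x^r) − f_j(x^r)‖₂². Then the ensemble prediction variance at the test point satisfies (1/M²) ∑_{1≤i<j≤M} ‖f_i(x*) − f_j(x*)‖₂² ≤ (√2·L·ε + σ)². -/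
lemma card_pairs_bound (M : ℕ) :
    ((Finset.univ.filter (fun p : Fin M × Fin M => p.1 < p.2)).card : ℝ) ≤ (M : ℝ) ^ 2 / 2 := by
  have e : ((Finset.univ.filter (fun p : Fin M × Fin M => p.1 < p.2)).card : ℝ)
      = ∑ i : Fin M, ∑ j : Fin M, (if i < j then (1 : ℝ) else 0) := by
    rw [Finset.card_filter, Fintype.sum_prod_type]
    push_cast
    rfl
  have e2 : ∑ i : Fin M, ∑ j : Fin M, (if i < j then (1 : ℝ) else 0)
      = ∑ i : Fin M, ∑ j : Fin M, (if j < i then (1 : ℝ) else 0) := Finset.sum_comm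
  have e3 : ∑ i : Fin M, ∑ j : Fin M, (if i < j then (1 : ℝ) else 0)
      + ∑ i : Fin M, ∑ j : Fin M, (if j < i then (1 : ℝ) else 0)
      ≤ ∑ i : Fin M, ∑ j : Fin M, (1 : ℝ) := by
    simp only [← Finset.sum_add_distrib]
    refine Finset.sum_le_sum fun i _ => Finset.sum_le_sum fun j _ => ?_
    split_ifs with h1 h2
    · exact absurd h2 (lt_asymm h1)
    all_goals norm_num
  simp only [Finset.sum_const, Finset.card_univ, Fintype.card_fin, nsmul_eq_mul, mul_one] at e3
  nlinarith

lemma sum_pairs_eq (M : ℕ) (F : Fin M → Fin M → ℝ) :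
    ∑ i : Fin M, ∑ j : Fin M, (if i < j then F i j else 0)
      = ∑ p ∈ Finset.univ.filter (fun p : Fin M × Fin M => p.1 < p.2), F p.1 p.2 := by
  rw [Finset.sum_filter, Fintype.sum_prod_type]

/-- Ensemble prediction variance bound via a consistent reliable neighbor
(Theorem on neighborhood consistency). -/
theorem ensemble_variance_bound {X : Type*} (M d m : ℕ) (hM : 1 ≤ M)
    (h : Fin M → X → EuclideanSpace ℝ (Fin d))
    (g : Fin M → EuclideanSpace ℝ (Fin d) → EuclideanSpace ℝ (Fin m))
    (L ε σ : ℝ) (hL : 0 ≤ L) (hσ : 0 ≤ σ)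
    (hlip : ∀ i, ∀ u v : EuclideanSpace ℝ (Fin d), ‖g i u - g i v‖ ≤ L * ‖u - v‖)
    (xstar xr : X)
    (hnb : ∀ i, ‖h i xr - h i xstar‖ ≤ ε)
    (hσ2 : σ ^ 2 = (1 / (M : ℝ) ^ 2) *
      ∑ i : Fin M, ∑ j : Fin M,
        (if i < j then ‖g i (h i xr) - g j (h j xr)‖ ^ 2 else 0)) :
    (1 / (M : ℝ) ^ 2) *
      ∑ i : Fin M, ∑ j : Fin M,
        (if i < j then ‖g i (h i xstar) - g j (h j xstar)‖ ^ 2 else 0)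
      ≤ (Real.sqrt 2 * L * ε + σ) ^ 2 := by
  have hMpos : (0 : ℝ) < (M : ℝ) ^ 2 := by
    have : (0 : ℝ) < M := by exact_mod_cast hM
    positivity
  have hε : 0 ≤ ε := (norm_nonneg _).trans (hnb ⟨0, hM⟩)
  have hc : 0 ≤ L * ε := mul_nonneg hL hε
  rw [sum_pairs_eq M (fun i j => ‖g i (h i xr) - g j (h j xr)‖ ^ 2)] at hσ2
  rw [sum_pairs_eq M (fun i j => ‖g i (h i xstar) - g j (h j xstar)‖ ^ 2)]
  have hN := card_pairs_bound M
  set P := Finset.univ.filter (fun p : Fin M × Fin M => p.1 < p.2) with hP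
  set a : Fin M × Fin M → ℝ := fun p => ‖g p.1 (h p.1 xr) - g p.2 (h p.2 xr)‖ with ha
  have hA : ∑ p ∈ P, a p ^ 2 = (M : ℝ) ^ 2 * σ ^ 2 := by
    rw [hσ2]
    field_simp
    rfl
  have hg : ∀ i, ‖g i (h i xr) - g i (h i xstar)‖ ≤ L * ε := fun i =>
    (hlip i _ _).trans (mul_le_mul_of_nonneg_left (hnb i) hL)
  have hb : ∀ p ∈ P, ‖g p.1 (h p.1 xstar) - g p.2 (h p.2 xstar)‖ ^ 2
      ≤ (a p + 2 * (L * ε)) ^ 2 := by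
    intro p _
    refine pow_le_pow_left₀ (norm_nonneg _) ?_ 2
    have e : g p.1 (h p.1 xstar) - g p.2 (h p.2 xstar)
        = (g p.1 (h p.1 xr) - g p.2 (h p.2 xr)) - (g p.1 (h p.1 xr) - g p.1 (h p.1 xstar))
          + (g p.2 (h p.2 xr) - g p.2 (h p.2 xstar)) := by abel
    rw [e]
    have h1 := norm_add_le ((g p.1 (h p.1 xr) - g p.2 (h p.2 xr))
      - (g p.1 (h p.1 xr) - g p.1 (h p.1 xstar))) (g p.2 (h p.2 xr) - g p.2 (h p.2 xstar))
    have h2 := norm_sub_le (g p.1 (h p.1 xr) - g p.2 (h p.2 xr))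
      (g p.1 (h p.1 xr) - g p.1 (h p.1 xstar))
    have h3 := hg p.1
    have h4 := hg p.2
    simp only [ha]
    linarith
  have hsum := Finset.sum_le_sum hb
  have hexp : ∑ p ∈ P, (a p + 2 * (L * ε)) ^ 2
      = ∑ p ∈ P, a p ^ 2 + 4 * (L * ε) * ∑ p ∈ P, a p + (P.card : ℝ) * (4 * (L * ε) ^ 2) := by
    rw [← nsmul_eq_mul, ← Finset.sum_const, Finset.mul_sum, ← Finset.sum_add_distrib,
      ← Finset.sum_add_distrib]
    exact Finset.sum_congr rfl fun p _ => by ring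
  have hs2 : Real.sqrt 2 ^ 2 = 2 := Real.sq_sqrt (by norm_num)
  have hs0 := Real.sqrt_nonneg 2
  have hS : 2 * ∑ p ∈ P, a p ≤ Real.sqrt 2 * (M : ℝ) ^ 2 * σ := by
    refine (abs_le_of_sq_le_sq' ?_ (by positivity)).2
    have hcs : (∑ p ∈ P, a p) ^ 2 ≤ (P.card : ℝ) * ∑ p ∈ P, a p ^ 2 := sq_sum_le_card_mul_sum_sq
    rw [hA] at hcs
    have h5 := mul_le_mul_of_nonneg_right hN (by positivity : 0 ≤ (M : ℝ) ^ 2 * σ ^ 2)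
    rw [mul_pow, mul_pow, mul_pow, hs2]
    linarith
  rw [one_div, inv_mul_le_iff₀ hMpos]
  refine hsum.trans ?_
  rw [hexp, hA]
  have h6 := mul_le_mul_of_nonneg_right hN (by positivity : 0 ≤ 4 * (L * ε) ^ 2)
  have h7 := mul_le_mul_of_nonneg_left hS (by positivity : 0 ≤ 2 * (L * ε))
  have e : (M : ℝ) ^ 2 * (Real.sqrt 2 * L * ε + σ) ^ 2
      = (M : ℝ) ^ 2 * (Real.sqrt 2 ^ 2 * (L * ε) ^ 2 + 2 * Real.sqrt 2 * (L * ε) * σ + σ ^ 2) := by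
    ring
  rw [e, hs2]
  linarith
end

section
/- Let X be a set with a point x* ∈ X, let d ≥ 1, let M ≥ 1, and let z_1, z_2 ∈ ℝ^d be nonzero vectors. Then there exist embedding functions h_1,…,h_{2M} : X → ℝ^d and invertible linear maps A_1,…,A_{2M} : ℝ^d → ℝ^d with A_1 = id and h_i = A_i ∘ h_1 for every i, such that h_{2i−1}(x*) = z_1 and h_{2i}(x*) = z_2 for every i (so the representation ensemble variance (1/(2M)²) ∑_{1≤i<j≤2M} ‖h_i(x*) − h_j(x*)‖₂² equals ‖z_1 − z_2‖₂²/4), and such that for every set Y, every class G of heads from ℝ^d to Y closed under precomposition with invertible linear maps, every performance functional p : (X → Y) → ℝ, and every g ∈ G optimal for h_1 (i.e., p(g'∘h_1) ≤ p(g∘h_1) for all g' ∈ G), the heads g_i := g ∘ A_i^{−1} belong to G, each g_i is optimal for h_i, and g_i ∘ h_i = g ∘ h_1 for all i; in particular the predictions g_i ∘ h_i(x*) are all equal, so the ensemble prediction variance at x* is zero. -/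
lemma sum_parity_row (M a : ℕ) (c : ℝ) :
    ∑ j ∈ Finset.range (2 * M), (if a % 2 = j % 2 then 0 else c) = M * c := by
  induction M with
  | zero => simp
  | succ k ih =>
    rw [show 2 * (k + 1) = 2 * k + 1 + 1 by ring, Finset.sum_range_succ, Finset.sum_range_succ, ih]
    rcases Nat.mod_two_eq_zero_or_one a with h | h
    · rw [if_pos (by omega), if_neg (by omega)]; push_cast; ring
    · rw [if_neg (by omega), if_pos (by omega)]; push_cast; ring

lemma sum_parity_pairs (M : ℕ) (c : ℝ) :
    ∑ i : Fin (2 * M), ∑ j : Fin (2 * M),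
      (if i < j then (if (i : ℕ) % 2 = (j : ℕ) % 2 then 0 else c) else 0) = (M : ℝ) ^ 2 * c := by
  set S := ∑ i : Fin (2 * M), ∑ j : Fin (2 * M),
      (if i < j then (if (i : ℕ) % 2 = (j : ℕ) % 2 then 0 else c) else 0) with hS
  have h1 : S = ∑ i : Fin (2 * M), ∑ j : Fin (2 * M),
      (if j < i then (if (i : ℕ) % 2 = (j : ℕ) % 2 then 0 else c) else 0) := by
    rw [hS, Finset.sum_comm]
    simp only [eq_comm]
  have h2 : S + S = ∑ i : Fin (2 * M), ∑ j : Fin (2 * M),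
      (if (i : ℕ) % 2 = (j : ℕ) % 2 then 0 else c) := by
    nth_rewrite 2 [h1]
    rw [hS, ← Finset.sum_add_distrib]
    refine Finset.sum_congr rfl fun i _ => ?_
    rw [← Finset.sum_add_distrib]
    refine Finset.sum_congr rfl fun j _ => ?_
    rcases lt_trichotomy i j with h | h | h
    · simp [h, h.not_gt]
    · simp [h]
    · simp [h, h.not_gt]
  have h3 : ∀ i : Fin (2 * M), ∑ j : Fin (2 * M),
      (if (i : ℕ) % 2 = (j : ℕ) % 2 then 0 else c) = M * c := fun i => by
    rw [← sum_parity_row M i c, Finset.sum_range]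
  simp only [h3, Finset.sum_const, Finset.card_univ, Fintype.card_fin, nsmul_eq_mul] at h2
  push_cast at h2
  linarith


/-- **Counter-example.** There exist embedding functions with large
representation ensemble variance at a test point, all linearly isomorphic to each other,
such that for every downstream task the optimal downstream heads yield identical
predictions at the test point (zero prediction variance). Indices are 0-based:
`h i xstar = z1` for even `i` and `= z2` for odd `i`. -/
theorem representation_variance_counterexample {X : Type*} (xstar : X) (d M : ℕ)
    (hd : 1 ≤ d) (hM : 1 ≤ M)
    (z1 z2 : EuclideanSpace ℝ (Fin d)) (hz1 : z1 ≠ 0) (hz2 : z2 ≠ 0) :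
    ∃ (h : Fin (2 * M) → X → EuclideanSpace ℝ (Fin d))
      (A : Fin (2 * M) → (EuclideanSpace ℝ (Fin d) ≃ₗ[ℝ] EuclideanSpace ℝ (Fin d))),
      A ⟨0, by omega⟩ = LinearEquiv.refl ℝ (EuclideanSpace ℝ (Fin d)) ∧
      (∀ i : Fin (2 * M), h i = ⇑(A i) ∘ h ⟨0, by omega⟩) ∧
      (∀ i : Fin (2 * M), h i xstar = if (i : ℕ) % 2 = 0 then z1 else z2) ∧
      (1 / ((2 * M : ℕ) : ℝ) ^ 2) *
          ∑ i : Fin (2 * M), ∑ j : Fin (2 * M),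
            (if i < j then ‖h i xstar - h j xstar‖ ^ 2 else 0)
        = ‖z1 - z2‖ ^ 2 / 4 ∧
      (∀ (Y : Type) (G : Set (EuclideanSpace ℝ (Fin d) → Y)),
        (∀ g ∈ G, ∀ B : EuclideanSpace ℝ (Fin d) ≃ₗ[ℝ] EuclideanSpace ℝ (Fin d),
          g ∘ ⇑B ∈ G) →
        ∀ (p : (X → Y) → ℝ), ∀ g ∈ G,
          (∀ g' ∈ G, p (g' ∘ h ⟨0, by omega⟩) ≤ p (g ∘ h ⟨0, by omega⟩)) →
          (∀ i : Fin (2 * M), g ∘ ⇑(A i).symm ∈ G) ∧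
          (∀ i : Fin (2 * M), ∀ g' ∈ G,
            p (g' ∘ h i) ≤ p ((g ∘ ⇑(A i).symm) ∘ h i)) ∧
          (∀ i : Fin (2 * M), (g ∘ ⇑(A i).symm) ∘ h i = g ∘ h ⟨0, by omega⟩) ∧
          (∀ i j : Fin (2 * M),
            (g ∘ ⇑(A i).symm) (h i xstar) = (g ∘ ⇑(A j).symm) (h j xstar))) := by
  obtain ⟨T, hT⟩ := SeparatingDual.exists_continuousLinearEquiv_apply_eq (R := ℝ) hz1 hz2
  have hM' : (M : ℝ) ≠ 0 := by
    have : M ≠ 0 := by omega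
    exact_mod_cast this
  let A : Fin (2 * M) → (EuclideanSpace ℝ (Fin d) ≃ₗ[ℝ] EuclideanSpace ℝ (Fin d)) := fun i =>
    if (i : ℕ) % 2 = 0 then LinearEquiv.refl ℝ _ else T.toLinearEquiv
  have hA0 : A ⟨0, by omega⟩ = LinearEquiv.refl ℝ _ := by simp [A]
  have hv : ∀ i, A i z1 = if (i : ℕ) % 2 = 0 then z1 else z2 := by
    intro i
    by_cases hi : (i : ℕ) % 2 = 0
    · simp [A, hi]
    · simp only [A, if_neg hi]
      exact hT
  have key : ∀ (Y : Type) (g : EuclideanSpace ℝ (Fin d) → Y) (i : Fin (2 * M)),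
      (g ∘ ⇑(A i).symm) ∘ (fun _ : X => A i z1) = g ∘ (fun _ : X => A ⟨0, by omega⟩ z1) := by
    intro Y g i
    funext x
    simp [hA0]
  refine ⟨fun i _ => A i z1, A, hA0, ?_, hv, ?_, ?_⟩
  · intro i
    funext x
    simp [hA0]
  · have hn : ∀ i j : Fin (2 * M), ‖A i z1 - A j z1‖ ^ 2 =
        if (i : ℕ) % 2 = (j : ℕ) % 2 then 0 else ‖z1 - z2‖ ^ 2 := by
      intro i j
      rw [hv, hv]
      rcases Nat.mod_two_eq_zero_or_one i with h | h <;>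
        rcases Nat.mod_two_eq_zero_or_one j with h' | h' <;> simp [h, h', norm_sub_rev]
    simp only [hn]
    rw [sum_parity_pairs]
    push_cast
    field_simp
    ring
  · intro Y G hG p g hg hopt
    refine ⟨fun i => hG g hg _, ?_, key Y g, ?_⟩
    · intro i g' hg'
      rw [key Y g i]
      have := hopt _ (hG g' hg' (A i))
      have e : (g' ∘ ⇑(A i)) ∘ (fun _ : X => A ⟨0, by omega⟩ z1) = g' ∘ (fun _ : X => A i z1) := by
        funext x
        simp [hA0]
      rw [← e]
      exact this
    · intro i j
      simp
end

section
/- Let X be a set, let h_1, h_2 : X → ℝ^d, and let g_1, g_2 : ℝ^d → ℝ^m each be Lipschitz with constant L ≥ 0; set f_1 = g_1 ∘ h_1 and f_2 = g_2 ∘ h_2. Suppose x*, x^a, x^b ∈ X satisfy ‖h_1(x^a) − h_1(x*)‖₂ ≤ ε and ‖h_2(x^b) − h_2(x*)‖₂ ≤ ε, and suppose ‖f_1(x*) − f_2(x*)‖₂ ≤ σ* and ‖f_1(x^b) − f_2(x^b)‖₂ ≤ σ_b. If in addition there exists L′ ≥ 0 such that ‖h_1(u) − h_1(v)‖₂ ≤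 L′·‖f_1(u) − f_1(v)‖₂ for all u, v ∈ X (an inverse-Lipschitz/bi-Lipschitz condition on the predictor f_1 relative to the embedding h_1), then ‖h_1(x^b) − h_1(x*)‖₂ ≤ L′·(σ* + σ_b + 2Lε) + ε; that is, x^b is also a neighbor of x* in the representation space of h_1. -/
/-- Under the hypotheses of Statement 11, if additionally the predictor
f₁ = g₁ ∘ h₁ is inverse-Lipschitz relative to h₁ with constant L′, then x^b is also a
neighbor of x* in the representation space of h₁. -/
theorem neighbor_transfer_bound {X : Type*} (d m : ℕ)
    (h1 h2 : X → EuclideanSpace ℝ (Fin d))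
    (g1 g2 : EuclideanSpace ℝ (Fin d) → EuclideanSpace ℝ (Fin m))
    (L ε σstar σb : ℝ) (hL : 0 ≤ L)
    (hg1 : ∀ u v : EuclideanSpace ℝ (Fin d), ‖g1 u - g1 v‖ ≤ L * ‖u - v‖)
    (hg2 : ∀ u v : EuclideanSpace ℝ (Fin d), ‖g2 u - g2 v‖ ≤ L * ‖u - v‖)
    (xstar xa xb : X)
    (hna : ‖h1 xa - h1 xstar‖ ≤ ε)
    (hnb : ‖h2 xb - h2 xstar‖ ≤ ε)
    (hstar : ‖g1 (h1 xstar) - g2 (h2 xstar)‖ ≤ σstar)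
    (hb : ‖g1 (h1 xb) - g2 (h2 xb)‖ ≤ σb)
    (L' : ℝ) (hL' : 0 ≤ L')
    (hinv : ∀ u v : X, ‖h1 u - h1 v‖ ≤ L' * ‖g1 (h1 u) - g1 (h1 v)‖) :
    ‖h1 xb - h1 xstar‖ ≤ L' * (σstar + σb + 2 * L * ε) + ε := by
  have hε : 0 ≤ ε := le_trans (norm_nonneg _) hnb
  have hLε : 0 ≤ L * ε := mul_nonneg hL hε
  have h2' : ‖g2 (h2 xb) - g2 (h2 xstar)‖ ≤ L * ε :=
    (hg2 _ _).trans (mul_le_mul_of_nonneg_left hnb hL)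
  have key : ‖g1 (h1 xb) - g1 (h1 xstar)‖ ≤ σstar + σb + 2 * L * ε := by
    have e : g1 (h1 xb) - g1 (h1 xstar) = (g1 (h1 xb) - g2 (h2 xb))
        + (g2 (h2 xb) - g2 (h2 xstar)) - (g1 (h1 xstar) - g2 (h2 xstar)) := by abel
    rw [e]
    have t1 := norm_sub_le ((g1 (h1 xb) - g2 (h2 xb))
        + (g2 (h2 xb) - g2 (h2 xstar))) (g1 (h1 xstar) - g2 (h2 xstar))
    have t2 := norm_add_le (g1 (h1 xb) - g2 (h2 xb)) (g2 (h2 xb) - g2 (h2 xstar))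
    linarith
  have h3 := (hinv xb xstar).trans (mul_le_mul_of_nonneg_left key hL')
  linarith
end
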